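/- There do not exist three real polynomials p₂, p₃, p₄, each of degree at most 4, each vanishing at −1 and at 1, each nonnegative on the interval [−1, 1], and satisfying ∫_{−1}^{1} p_i′(x)·p_j′(x) dx = 1 if i = j and = 0 if i ≠ j, for i, j ∈ {2,3,4}. In other words, there is no nonnegative H¹₀-orthonormal basis of the space of polynomials of degree at most 4 vanishing at ±1. -/

import Mathlib

open Polynomial intervalIntegral

/-!
A polynomial of degree at most 4 vanishing at `±1` is `p = (1 - x²)(a + b x + c x²)`. Expanding `p'`
in Legendre polynomials diagonalises the inner product: in the coordinates `s = a + c/5`, `b`, `c`,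
`⟨p, p̃⟩ = (8/3) s s̃ + (8/5) b b̃ + (128/175) c c̃`.

Hence for an orthonormal triple, `(8/3) ∑ s² = (8/5) ∑ b² = (128/175) ∑ c² = 1` and `∑ s c = 0`, so
the quadratic form `Q = 2 · (8/3) s² - (128/175) c² + (16/5) s c - (8/5) b²`, which has trace zero
with respect to the inner product, sums to `0` over the triple. On the other hand `Q > 0` on every
nonzero `p` that is nonnegative on `[-1, 1]` (`form_pos`), since then `a + b x + c x² ≥ 0` there.
-/

/-- Strict positivity of the trace-zero form on the cone of quadratics nonnegative on `[-1, 1]`.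
The cone is described by `b² ≤ 4ac` when `a ≤ c` (the vertex then lies in `[-1, 1]`) and by
`|b| ≤ a + c` otherwise. -/
lemma form_pos (a b c : ℝ) (hq : ∀ x ∈ Set.Icc (-1 : ℝ) 1, 0 ≤ a + b * x + c * x ^ 2)
    (hne : ¬ (a = 0 ∧ b = 0 ∧ c = 0)) :
    0 < 16 / 3 * (a + c / 5) ^ 2 - 128 / 175 * c ^ 2 + 16 / 5 * ((a + c / 5) * c)
      - 8 / 5 * b ^ 2 := by
  have h0 := hq 0 (by norm_num)
  have h1 := hq 1 (by norm_num)
  have h2 := hq (-1) (by norm_num)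
  norm_num at h0 h1 h2
  by_cases hca : a ≤ c
  · rcases (h0.trans hca).eq_or_lt with hc | hc
    · exact absurd ⟨by linarith, by linarith, hc.symm⟩ hne
    · have hv := hq (-b / (2 * c)) ⟨by rw [le_div_iff₀ (by linarith)]; linarith,
        by rw [div_le_iff₀ (by linarith)]; linarith⟩
      have hb : b ^ 2 ≤ 4 * a * c := by
        have e : a + b * (-b / (2 * c)) + c * (-b / (2 * c)) ^ 2
            = (4 * a * c - b ^ 2) / (4 * c) := by
          field_simp; ring
        rw [e, le_div_iff₀ (by linarith)] at hv
        linarith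
      -- After replacing `b²` by `4ac` a positive definite form in `(a + c/5, c)` remains.
      nlinarith [sq_nonneg (a + c / 5 - 3 / 10 * c), mul_pos hc hc]
  · push Not at hca
    have hb : b ^ 2 ≤ (a + c) ^ 2 := by nlinarith
    nlinarith [mul_nonneg (show 0 ≤ a + c by linarith) (show 0 ≤ a - c by linarith),
      mul_nonneg (show 0 ≤ a by linarith) (show 0 ≤ a + c by linarith),
      mul_pos (show 0 < a by linarith) (show 0 < a by linarith)]

lemma exists_coords (p : ℝ[X]) (hd : p.degree ≤ 4) (hl : p.eval (-1) = 0) (hr : p.eval 1 = 0) :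
    ∃ a b c : ℝ, p = (1 - X ^ 2) * (C a + C b * X + C c * X ^ 2) := by
  have hs := p.as_sum_range_C_mul_X_pow' (n := 5)
    (Nat.lt_succ_of_le (natDegree_le_of_degree_le hd))
  simp only [Finset.sum_range_succ, Finset.sum_range_zero] at hs
  rw [hs] at hl hr
  simp at hl hr
  refine ⟨p.coeff 0, p.coeff 1, -p.coeff 4, ?_⟩
  have e2 : p.coeff 2 = -p.coeff 0 - p.coeff 4 := by linarith
  have e3 : p.coeff 3 = -p.coeff 1 := by linarith
  rw [e2, e3] at hs
  conv_lhs => rw [hs]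
  simp only [map_neg, map_sub]
  ring

/-- The inner product in the coordinates in which it is diagonal. -/
lemma integral_coords (a b c a' b' c' : ℝ) :
    (∫ x in (-1 : ℝ)..1,
      (((1 - X ^ 2) * (C a + C b * X + C c * X ^ 2) : ℝ[X]).derivative.eval x) *
      (((1 - X ^ 2) * (C a' + C b' * X + C c' * X ^ 2) : ℝ[X]).derivative.eval x)) =
    8 / 3 * ((a + c / 5) * (a' + c' / 5)) + 8 / 5 * (b * b') + 128 / 175 * (c * c') := by
  have key : ∀ k0 k1 k2 k3 k4 k5 k6 : ℝ,
      (∫ x in (-1 : ℝ)..1, (C k0 + C k1 * X + C k2 * X ^ 2 + C k3 * X ^ 3 + C k4 * X ^ 4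
        + C k5 * X ^ 5 + C k6 * X ^ 6 : ℝ[X]).eval x) =
      2 * k0 + 2 / 3 * k2 + 2 / 5 * k4 + 2 / 7 * k6 := by
    intro k0 k1 k2 k3 k4 k5 k6
    refine (integral_eq_sub_of_hasDerivAt (f := fun x => (C k0 * X + C (k1 / 2) * X ^ 2
        + C (k2 / 3) * X ^ 3 + C (k3 / 4) * X ^ 4 + C (k4 / 5) * X ^ 5 + C (k5 / 6) * X ^ 6
        + C (k6 / 7) * X ^ 7 : ℝ[X]).eval x) (fun x _ => ?_)
        ((Polynomial.continuous _).intervalIntegrable _ _)).trans ?_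
    · refine (Polynomial.hasDerivAt _ x).congr_deriv ?_
      simp; ring
    · simp; ring
  have := key (b * b') (2 * (b * (c' - a') + b' * (c - a)))
    (4 * (c - a) * (c' - a') - 6 * b * b')
    (-4 * (b * c' + b' * c) - 6 * (b * (c' - a') + b' * (c - a)))
    (9 * b * b' - 8 * ((c - a) * c' + (c' - a') * c))
    (12 * (b * c' + b' * c)) (16 * c * c')
  calc _ = _ := by
        refine (integral_congr fun x _ => ?_).trans this
        simp
        ring
    _ = _ := by ring

/-- The factor `1 - x²` is positive only on the open interval, so nonnegativity of the cofactor at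
the endpoints comes from continuity. -/
lemma cofactor_nonneg (a b c : ℝ)
    (h : ∀ x ∈ Set.Icc (-1 : ℝ) 1,
      0 ≤ ((1 - X ^ 2) * (C a + C b * X + C c * X ^ 2) : ℝ[X]).eval x) :
    ∀ x ∈ Set.Icc (-1 : ℝ) 1, 0 ≤ a + b * x + c * x ^ 2 := by
  have hcl : IsClosed {x : ℝ | 0 ≤ a + b * x + c * x ^ 2} :=
    isClosed_le continuous_const (by fun_prop)
  have hsub : Set.Ioo (-1 : ℝ) 1 ⊆ {x : ℝ | 0 ≤ a + b * x + c * x ^ 2} := by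
    intro x hx
    have h' := h x (Set.Ioo_subset_Icc_self hx)
    simp at h'
    have hpos : 0 < 1 - x ^ 2 := by nlinarith [hx.1, hx.2]
    exact nonneg_of_mul_nonneg_right h' hpos
  have := hcl.closure_subset_iff.mpr hsub
  rwa [closure_Ioo (by norm_num)] at this

theorem no_nonnegative_H10_orthonormal_basis :
    ¬ ∃ p : Fin 3 → Polynomial ℝ,
      (∀ i, (p i).degree ≤ 4) ∧
      (∀ i, (p i).eval (-1) = 0) ∧
      (∀ i, (p i).eval 1 = 0) ∧
      (∀ i, ∀ x ∈ Set.Icc (-1 : ℝ) 1, 0 ≤ (p i).eval x) ∧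
      (∀ i j, (∫ x in (-1 : ℝ)..1,
          ((p i).derivative.eval x) * ((p j).derivative.eval x)) =
        if i = j then 1 else 0) := by
  rintro ⟨p, hd, hl, hr, hn, ho⟩
  choose a b c hp using fun i => exists_coords (p i) (hd i) (hl i) (hr i)
  have hG : ∀ i j, 8 / 3 * ((a i + c i / 5) * (a j + c j / 5)) + 8 / 5 * (b i * b j)
      + 128 / 175 * (c i * c j) = if i = j then 1 else 0 := by
    intro i j
    rw [← ho i j, hp i, hp j, integral_coords]
  have hpos : ∀ i, 0 < 16 / 3 * (a i + c i / 5) ^ 2 - 128 / 175 * c i ^ 2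
      + 16 / 5 * ((a i + c i / 5) * c i) - 8 / 5 * b i ^ 2 := by
    intro i
    refine form_pos _ _ _ (cofactor_nonneg _ _ _ fun x hx => hp i ▸ hn i x hx) ?_
    rintro ⟨ha, hb, hc⟩
    have := hG i i
    simp [ha, hb, hc] at this
  -- Orthonormality reads `M * N = 1`, where the rows of `M` are the coordinate vectors and `N` is
  -- the weighted transpose of `M`; then `N * M = 1` gives the sums over the triple.
  let M : Matrix (Fin 3) (Fin 3) ℝ := Matrix.of fun i => ![a i + c i / 5, b i, c i]
  let N : Matrix (Fin 3) (Fin 3) ℝ := Matrix.of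
    ![fun i => 8 / 3 * (a i + c i / 5), fun i => 8 / 5 * b i, fun i => 128 / 175 * c i]
  have hMN : M * N = 1 := by
    ext i j
    rw [Matrix.one_apply, ← hG i j]
    simp [M, N, Matrix.mul_apply, Fin.sum_univ_three]
    ring
  have hNM : N * M = 1 := mul_eq_one_comm.mp hMN
  have hss := congrFun (congrFun hNM 0) 0
  have hsc := congrFun (congrFun hNM 0) 2
  have hbb := congrFun (congrFun hNM 1) 1
  have hcc := congrFun (congrFun hNM 2) 2
  simp [M, N, Matrix.mul_apply, Fin.sum_univ_three] at hss hsc hbb hcc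
  have p0 := hpos 0
  have p1 := hpos 1
  have p2 := hpos 2
  linarith
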